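/- Let ε > 0, k > 0, a < b, let M be a positive even integer with grid points x_j = a + j(b-a)/M for j = 0,…,M-1, let V : ℝ → ℝ, and set μ_l = 2πl/(b-a) for -M/2 ≤ l ≤ M/2-1. Given Ψⁿ ∈ ℂ^M, define the discrete Fourier coefficients Ψ̂ⁿ_l = Σ_{j=0}^{M-1} Ψⁿ_j exp(-i μ_l (x_j - a)), the intermediate values Ψ*_j = (1/M) Σ_{l=-M/2}^{M/2-1} exp(-i ε k μ_l²/2) Ψ̂ⁿ_l exp(i μ_l (x_j - a)), and the update Ψ^{n+1}_j = exp(-i V(x_j) k/ε) Ψ*_j. Then the scheme conserves the discrete l² norm: Σ_{j=0}^{M-1} |Ψ^{n+1}_j|² = Σ_{j=0}^{M-1} |Ψⁿ_j|². -/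

import Mathlib

open Complex Finset

/-- Parseval identity from an orthogonality relation. -/
theorem tssp_parseval {ι κ : Type} [DecidableEq ι] (s : Finset ι) (t : Finset κ)
    (E : ι → κ → ℂ) (m : ℂ)
    (h : ∀ l ∈ s, ∀ l' ∈ s, ∑ j ∈ t, E l j * (starRingEnd ℂ) (E l' j) = if l = l' then m else 0)
    (c : ι → ℂ) :
    (∑ j ∈ t, ((‖∑ l ∈ s, c l * E l j‖ ^ 2 : ℝ) : ℂ)) = m * ∑ l ∈ s, ((‖c l‖ ^ 2 : ℝ) : ℂ) := by
  have key : ∀ z : ℂ, ((‖z‖ ^ 2 : ℝ) : ℂ) = z * (starRingEnd ℂ) z := by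
    intro z
    rw [Complex.mul_conj, Complex.normSq_eq_norm_sq]
  simp only [key, map_sum, map_mul, Finset.sum_mul_sum]
  rw [Finset.sum_comm, Finset.mul_sum]
  refine Finset.sum_congr rfl fun l hl => ?_
  rw [Finset.sum_comm]
  have : ∀ l' ∈ s, ∑ j ∈ t, c l * E l j * ((starRingEnd ℂ) (c l') * (starRingEnd ℂ) (E l' j))
      = if l = l' then c l * (starRingEnd ℂ) (c l') * m else 0 := by
    intro l' hl'
    have h1 := h l hl l' hl'
    calc _ = c l * (starRingEnd ℂ) (c l') * ∑ j ∈ t, E l j * (starRingEnd ℂ) (E l' j) := by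
          rw [Finset.mul_sum]
          exact Finset.sum_congr rfl fun j _ => by ring
      _ = _ := by rw [h1]; split_ifs <;> simp
  rw [Finset.sum_congr rfl this, Finset.sum_ite_eq, if_pos hl]
  ring

/-- Geometric sums of roots of unity. -/
theorem tssp_geom (M : ℕ) (hM : 0 < M) (d : ℤ) (h1 : -(M : ℤ) < d) (h2 : d < M) :
    ∑ j ∈ Finset.range M, Complex.exp (2 * Real.pi * Complex.I * (d * j / M)) =
      if d = 0 then (M : ℂ) else 0 := by
  have hMc : (M : ℂ) ≠ 0 := by exact_mod_cast hM.ne'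
  split_ifs with hd
  · simp [hd]
  · set r := Complex.exp (2 * Real.pi * Complex.I * (d / M)) with hr
    have hrM : r ^ M = 1 := by
      rw [hr, ← Complex.exp_nat_mul, Complex.exp_eq_one_iff]
      exact ⟨d, by field_simp⟩
    have hr1 : r ≠ 1 := by
      intro h
      rw [hr, Complex.exp_eq_one_iff] at h
      obtain ⟨n, hn⟩ := h
      have hpi := Complex.two_pi_I_ne_zero
      rw [mul_comm (n : ℂ)] at hn
      have h3 := mul_left_cancel₀ hpi hn
      rw [div_eq_iff hMc] at h3
      have h4 : d = n * M := by exact_mod_cast h3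
      have h5 : d = 0 := Int.eq_zero_of_abs_lt_dvd ⟨n, by rw [h4, mul_comm]⟩ (abs_lt.mpr ⟨h1, h2⟩)
      exact hd h5
    have : ∀ j ∈ Finset.range M, Complex.exp (2 * Real.pi * Complex.I * (d * j / M)) = r ^ j := by
      intro j _
      rw [hr, ← Complex.exp_nat_mul]
      congr 1
      ring
    rw [Finset.sum_congr rfl this, geom_sum_eq hr1, hrM]
    simp

theorem tssp_geom_shift (N : ℕ) (hN : 0 < N) (d : ℤ) (h1 : -((N + N : ℕ) : ℤ) < d)
    (h2 : d < (N + N : ℕ)) :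
    ∑ l ∈ Finset.Icc (-(N : ℤ)) (N - 1),
      Complex.exp (2 * Real.pi * Complex.I * (d * l / ((N + N : ℕ) : ℂ))) =
      if d = 0 then ((N + N : ℕ) : ℂ) else 0 := by
  have e : ∑ l ∈ Finset.Icc (-(N : ℤ)) (N - 1),
      Complex.exp (2 * Real.pi * Complex.I * (d * l / ((N + N : ℕ) : ℂ))) =
      ∑ j ∈ Finset.range (N + N), Complex.exp (2 * Real.pi * Complex.I * (d * (-N) / ((N + N : ℕ) : ℂ)))
        * Complex.exp (2 * Real.pi * Complex.I * (d * j / ((N + N : ℕ) : ℂ))) := by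
    symm
    refine Finset.sum_bij (fun j _ => (j : ℤ) - N) ?_ ?_ ?_ ?_
    · intro j hj
      simp only [Finset.mem_range, Finset.mem_Icc] at *
      omega
    · intro i _ j _ h
      omega
    · intro l hl
      simp only [Finset.mem_Icc] at hl
      exact ⟨(l + N).toNat, by simp only [Finset.mem_range]; omega, by omega⟩
    · intro j _
      rw [← Complex.exp_add]
      congr 1
      push_cast
      ring
  rw [e, ← Finset.mul_sum, tssp_geom _ (by omega) d h1 h2]
  split_ifs with hd
  · simp [hd]
  · simp

/-- The first-order time-splitting spectral (TSSP) scheme for the semiclassical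
Schrödinger equation conserves the discrete `l²` norm:
`Σ_j |Ψ^{n+1}_j|² = Σ_j |Ψⁿ_j|²`. -/
theorem tssp_conserves_discrete_l2_norm
    (ε k a b : ℝ) (hε : 0 < ε) (hk : 0 < k) (hab : a < b)
    (M : ℕ) (hM : 0 < M) (hMeven : Even M)
    (V : ℝ → ℝ)
    (μ : ℤ → ℝ) (hμ : ∀ l : ℤ, μ l = 2 * Real.pi * l / (b - a))
    (x : ℕ → ℝ) (hx : ∀ j : ℕ, x j = a + j * ((b - a) / M))
    (Ψn Ψstar Ψnp1 : ℕ → ℂ) (Ψhat : ℤ → ℂ)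
    -- discrete Fourier coefficients Ψ̂ⁿ_l = Σ_{j<M} Ψⁿ_j exp(-i μ_l (x_j - a))
    (hΨhat : ∀ l : ℤ, Ψhat l = ∑ j ∈ Finset.range M,
      Ψn j * Complex.exp (-Complex.I * ((μ l : ℝ) : ℂ) * ((x j - a : ℝ) : ℂ)))
    -- intermediate values
    -- Ψ*_j = (1/M) Σ_{l=-M/2}^{M/2-1} exp(-iεk μ_l²/2) Ψ̂ⁿ_l exp(i μ_l (x_j - a))
    (hΨstar : ∀ j : ℕ, Ψstar j = (1 / (M : ℂ)) *
      ∑ l ∈ Finset.Icc (-(M : ℤ) / 2) ((M : ℤ) / 2 - 1),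
        Complex.exp (-Complex.I * (ε : ℂ) * (k : ℂ) * ((μ l : ℝ) : ℂ) ^ 2 / 2) *
          Ψhat l * Complex.exp (Complex.I * ((μ l : ℝ) : ℂ) * ((x j - a : ℝ) : ℂ)))
    -- update Ψ^{n+1}_j = exp(-i V(x_j) k/ε) Ψ*_j
    (hΨnp1 : ∀ j : ℕ, Ψnp1 j =
      Complex.exp (-Complex.I * ((V (x j) : ℝ) : ℂ) * (k : ℂ) / (ε : ℂ)) * Ψstar j) :
    ∑ j ∈ Finset.range M, ‖Ψnp1 j‖ ^ 2 = ∑ j ∈ Finset.range M, ‖Ψn j‖ ^ 2 := by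
  obtain ⟨N, rfl⟩ := hMeven
  have hN : 0 < N := by omega
  have hMc : ((N + N : ℕ) : ℂ) ≠ 0 := by exact_mod_cast hM.ne'
  have hMr : ((N + N : ℕ) : ℝ) ≠ 0 := by exact_mod_cast hM.ne'
  have hba : b - a ≠ 0 := by linarith
  have hI : Finset.Icc (-((N + N : ℕ) : ℤ) / 2) (((N + N : ℕ) : ℤ) / 2 - 1)
      = Finset.Icc (-(N : ℤ)) (N - 1) := by
    congr 1 <;> omega
  rw [hI] at hΨstar
  have hph : ∀ (l : ℤ) (j : ℕ), μ l * (x j - a) = 2 * Real.pi * (l * j / ((N + N : ℕ) : ℝ)) := by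
    intro l j
    rw [hμ, hx]
    field_simp
    ring
  have hphc : ∀ (l : ℤ) (j : ℕ), ((μ l : ℝ) : ℂ) * ((x j - a : ℝ) : ℂ)
      = 2 * Real.pi * (l * j / ((N + N : ℕ) : ℂ)) := by
    intro l j
    rw [← Complex.ofReal_mul, hph]
    push_cast
    ring
  have hE : ∀ (l : ℤ) (j : ℕ), Complex.exp (Complex.I * ((μ l : ℝ) : ℂ) * ((x j - a : ℝ) : ℂ))
      = Complex.exp (2 * Real.pi * Complex.I * (l * j / ((N + N : ℕ) : ℂ))) := by
    intro l j
    rw [mul_assoc, hphc]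
    congr 1
    ring
  have hE' : ∀ (l : ℤ) (j : ℕ), Complex.exp (-Complex.I * ((μ l : ℝ) : ℂ) * ((x j - a : ℝ) : ℂ))
      = Complex.exp (2 * Real.pi * Complex.I * (-(l * j) / ((N + N : ℕ) : ℂ))) := by
    intro l j
    rw [mul_assoc, hphc]
    congr 1
    ring
  simp only [hE] at hΨstar
  simp only [hE'] at hΨhat
  have hu1 : ∀ j, ‖Ψnp1 j‖ = ‖Ψstar j‖ := by
    intro j
    have : -Complex.I * ((V (x j) : ℝ) : ℂ) * (k : ℂ) / (ε : ℂ)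
        = ((-(V (x j) * k / ε) : ℝ) : ℂ) * Complex.I := by
      push_cast
      ring
    rw [hΨnp1, norm_mul, this, Complex.norm_exp_ofReal_mul_I, one_mul]
  have hu2 : ∀ l : ℤ, ‖Complex.exp (-Complex.I * (ε : ℂ) * (k : ℂ) * ((μ l : ℝ) : ℂ) ^ 2 / 2)
      * Ψhat l‖ = ‖Ψhat l‖ := by
    intro l
    have : -Complex.I * (ε : ℂ) * (k : ℂ) * ((μ l : ℝ) : ℂ) ^ 2 / 2
        = ((-(ε * k * μ l ^ 2 / 2) : ℝ) : ℂ) * Complex.I := by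
      push_cast
      ring
    rw [norm_mul, this, Complex.norm_exp_ofReal_mul_I, one_mul]
  have hconj : ∀ q : ℝ, (starRingEnd ℂ) (Complex.exp (2 * Real.pi * Complex.I * (q : ℂ)))
      = Complex.exp (2 * Real.pi * Complex.I * (-q : ℂ)) := by
    intro q
    rw [← Complex.exp_conj]
    congr 1
    simp [Complex.conj_ofNat]
  have hconj1 : ∀ (l : ℤ) (j : ℕ),
      (starRingEnd ℂ) (Complex.exp (2 * Real.pi * Complex.I * (l * j / ((N + N : ℕ) : ℂ))))
      = Complex.exp (2 * Real.pi * Complex.I * (-(l * j / ((N + N : ℕ) : ℂ)))) := by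
    intro l j
    have := hconj (l * j / ((N + N : ℕ) : ℝ))
    push_cast at this ⊢
    exact this
  have hconj2 : ∀ (l : ℤ) (j : ℕ),
      (starRingEnd ℂ) (Complex.exp (2 * Real.pi * Complex.I * (-(l * j) / ((N + N : ℕ) : ℂ))))
      = Complex.exp (2 * Real.pi * Complex.I * (l * j / ((N + N : ℕ) : ℂ))) := by
    intro l j
    have := hconj (-(l * j) / ((N + N : ℕ) : ℝ))
    push_cast at this ⊢
    rw [this]
    congr 1
    ring
  have P1 := tssp_parseval (Finset.Icc (-(N : ℤ)) (N - 1)) (Finset.range (N + N))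
    (fun l j => Complex.exp (2 * Real.pi * Complex.I * (l * j / ((N + N : ℕ) : ℂ))))
    ((N + N : ℕ) : ℂ) (by
      intro l hl l' hl'
      simp only [Finset.mem_Icc] at hl hl'
      have g := tssp_geom (N + N) hM (l - l') (by omega) (by omega)
      simp only [sub_eq_zero] at g
      rw [← g]
      refine Finset.sum_congr rfl fun j _ => ?_
      rw [hconj1, ← Complex.exp_add]
      congr 1
      push_cast
      ring)
    (fun l => Complex.exp (-Complex.I * (ε : ℂ) * (k : ℂ) * ((μ l : ℝ) : ℂ) ^ 2 / 2) * Ψhat l)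
  have P2 := tssp_parseval (Finset.range (N + N)) (Finset.Icc (-(N : ℤ)) (N - 1))
    (fun j l => Complex.exp (2 * Real.pi * Complex.I * (-(l * j) / ((N + N : ℕ) : ℂ))))
    ((N + N : ℕ) : ℂ) (by
      intro j hj j' hj'
      simp only [Finset.mem_range] at hj hj'
      have g := tssp_geom_shift N hN ((j' : ℤ) - j) (by omega) (by omega)
      have hiff : ((j' : ℤ) - j = 0) ↔ (j = j') := by omega
      simp only [hiff] at g
      rw [← g]
      refine Finset.sum_congr rfl fun l _ => ?_
      rw [hconj2, ← Complex.exp_add]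
      congr 1
      push_cast
      ring)
    Ψn
  simp only [hu2] at P1
  simp only [← hΨhat] at P2
  rw [P2] at P1
  have hs : ∀ j : ℕ, ((‖∑ l ∈ Finset.Icc (-(N : ℤ)) (N - 1),
      Complex.exp (-Complex.I * (ε : ℂ) * (k : ℂ) * ((μ l : ℝ) : ℂ) ^ 2 / 2) * Ψhat l *
        Complex.exp (2 * Real.pi * Complex.I * (l * j / ((N + N : ℕ) : ℂ)))‖ ^ 2 : ℝ) : ℂ)
      = ((N + N : ℕ) : ℂ) ^ 2 * ((‖Ψstar j‖ ^ 2 : ℝ) : ℂ) := by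
    intro j
    rw [hΨstar j, norm_mul, norm_div, norm_one, Complex.norm_natCast, mul_pow]
    rw [Complex.ofReal_mul, ← mul_assoc, Complex.ofReal_pow, Complex.ofReal_pow, Complex.ofReal_div,
      Complex.ofReal_natCast, Complex.ofReal_one, div_pow, one_pow, mul_one_div_cancel (pow_ne_zero 2 hMc), one_mul]
  simp only [hs] at P1
  rw [← Finset.mul_sum, ← mul_assoc, ← sq] at P1
  have P3 := mul_left_cancel₀ (pow_ne_zero 2 hMc) P1
  simp only [hu1]
  exact_mod_cast P3
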